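/- Fix ρ ∈ (0,1) and α ∈ (0,1). Let (α_n) be a sequence in (0,1) with n·α_n → α as n → ∞, and let c_n be defined by Φ(−c_n) = α_n. Then limsup_{n→∞} H_n''(ρ, c_n) ≤ 0, where H_n''(ρ, c_n) denotes the second derivative of the function ρ ↦ H_n(ρ, c_n) evaluated at ρ. -/

import Mathlib

open MeasureTheory Filter

/-- The standard normal density. -/
noncomputable def phi (x : ℝ) : ℝ := (Real.sqrt (2 * Real.pi))⁻¹ * Real.exp (-x ^ 2 / 2)

/-- The standard normal cumulative distribution function. -/
noncomputable def Phi (x : ℝ) : ℝ := ∫ t in Set.Iic x, phi t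

/-- d(ρ,c,z) = (c + √ρ·z)/√(1−ρ). -/
noncomputable def dd (ρ c z : ℝ) : ℝ := (c + Real.sqrt ρ * z) / Real.sqrt (1 - ρ)

/-- G(ρ,c,z) = (c + z/√ρ)/(2(1−ρ)^{3/2}). -/
noncomputable def G (ρ c z : ℝ) : ℝ :=
  (c + z / Real.sqrt ρ) / (2 * (1 - ρ) ^ ((3 : ℝ) / 2))

/-- H_n(ρ,c) = ∫ Φ(d(ρ,c,z))^n φ(z) dz. -/
noncomputable def Hn (n : ℕ) (ρ c : ℝ) : ℝ := ∫ z : ℝ, (Phi (dd ρ c z)) ^ n * phi z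

open Metric Asymptotics
open scoped Topology

/-!
For `r` near `ρ`, an affine substitution `z ↦ s(r) z + p(r) c` turns `dd r c` into `dd ρ c`, so that
`1 - Hn n r c` is the integral of the weight `1 - Phi (dd ρ c z) ^ n`, which does not depend on `r`,
against a Gaussian kernel that extends holomorphically to complex `r`. For `r` close enough to `ρ`
the kernel is `O(exp (η c ^ 2 - 3 z ^ 2 / 8))` with `η` as small as we please. When `n * Phi (-c)`
stays bounded, the weight is `O(exp (-a c ^ 2 + z ^ 2 / 4))` for some `a > 0`: either `z ≤ -ε c`, or
`dd ρ c z ≥ κ c` with `κ > 1` and `n * Phi (-κ c)` is much smaller than `n * Phi (-c)`. Hence the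
holomorphic extension of `1 - Hn n r c` tends to zero uniformly on a disc around `ρ`, and by
Cauchy's estimates all its derivatives at `ρ` tend to zero.
-/

/-! ### Derivatives of real functions with a holomorphic extension -/

theorem differentiableOn_integral_of_norm_le {α E : Type*} [MeasurableSpace α] {μ : Measure α}
    [NormedAddCommGroup E] [NormedSpace ℂ E] {F : ℂ → α → E} {bound : α → ℝ} {U : Set ℂ}
    (hU : IsOpen U) (hF_meas : ∀ z ∈ U, AEStronglyMeasurable (F z) μ)
    (h_diff : ∀ᵐ a ∂μ, DifferentiableOn ℂ (F · a) U)
    (h_bound : ∀ᵐ a ∂μ, ∀ z ∈ U, ‖F z a‖ ≤ bound a) (bound_integrable : Integrable bound μ) :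
    DifferentiableOn ℂ (fun z => ∫ a, F z a ∂μ) U := by
  intro z₀ hz₀
  obtain ⟨R, hR, hRU⟩ := nhds_basis_closedBall.mem_iff.1 (hU.mem_nhds hz₀)
  have hsub : ∀ z ∈ ball z₀ (R / 2), closedBall z (R / 2) ⊆ U := fun z hz =>
    (closedBall_subset_closedBall' (by linarith [mem_ball.1 hz])).trans hRU
  have hmem : ∀ z ∈ ball z₀ (R / 2), z ∈ U := fun z hz =>
    hsub z hz (mem_closedBall_self (by positivity))
  have cauchy : ∀ᵐ a ∂μ, ∀ z ∈ ball z₀ (R / 2), ‖deriv (F · a) z‖ ≤ bound a / (R / 2) := by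
    filter_upwards [h_diff, h_bound] with a hd hb z hz
    exact Complex.norm_deriv_le_of_forall_mem_sphere_norm_le (by positivity)
      (hd.diffContOnCl_ball (hsub z hz)) fun w hw => hb w (hsub z hz (sphere_subset_closedBall hw))
  have deriv_meas : AEStronglyMeasurable (fun a => deriv (F · a) z₀) μ := by
    have hU_punctured : ∀ᶠ z in 𝓝[≠] z₀, z ∈ U :=
      (hU.eventually_mem hz₀).filter_mono nhdsWithin_le_nhds
    obtain ⟨u, hu, huU⟩ := exists_seq_forall_of_frequently hU_punctured.frequently
    refine aestronglyMeasurable_of_tendsto_ae atTop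
      (f := fun i a => slope (F · a) z₀ (u i)) (fun i => ?_) ?_
    · exact ((hF_meas _ (huU i)).sub (hF_meas z₀ hz₀)).const_smul _
    · filter_upwards [h_diff] with a hd
      exact (hd.hasDerivAt (hU.mem_nhds hz₀)).tendsto_slope.comp hu
  refine (hasDerivAt_integral_of_dominated_loc_of_deriv_le (ball_mem_nhds z₀ (half_pos hR))
    ((hU.eventually_mem hz₀).mono hF_meas)
    (bound_integrable.mono' (hF_meas z₀ hz₀) (h_bound.mono fun a ha => ha z₀ hz₀)) deriv_meas cauchy
    (bound_integrable.div_const _) ?_).2.differentiableAt.differentiableWithinAt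
  filter_upwards [h_diff] with a hd z hz
  exact hd.hasDerivAt (hU.mem_nhds (hmem z hz))

theorem iteratedDeriv_re_comp_ofReal {F : ℂ → ℂ} {x : ℝ} (hF : AnalyticAt ℂ F x) (k : ℕ) :
    iteratedDeriv k (fun r : ℝ => (F r).re) x = (iteratedDeriv k F x).re := by
  induction k generalizing F with
  | zero => simp only [iteratedDeriv_zero]
  | succ k ih =>
    have hderiv : deriv (fun r : ℝ => (F r).re) =ᶠ[𝓝 x] fun r : ℝ => (deriv F r).re := by
      filter_upwards [Complex.continuous_ofReal.continuousAt.eventually hF.eventually_analyticAt]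
        with r hr
      exact hr.differentiableAt.hasDerivAt.real_of_complex.deriv
    rw [iteratedDeriv_succ', iteratedDeriv_succ', hderiv.iteratedDeriv_eq, ih hF.deriv]

theorem abs_iteratedDeriv_le_of_forall_mem_sphere_norm_le {f : ℝ → ℝ} {F : ℂ → ℂ} {x R C : ℝ}
    (k : ℕ) (hR : 0 < R) (hF : DiffContOnCl ℂ F (ball x R)) (hC : ∀ z ∈ sphere (x : ℂ) R, ‖F z‖ ≤ C)
    (hfF : ∀ᶠ r : ℝ in 𝓝 x, (f r : ℂ) = F r) :
    |iteratedDeriv k f x| ≤ k.factorial * C / R ^ k := by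
  have hre : f =ᶠ[𝓝 x] fun r => (F r).re := by
    filter_upwards [hfF] with r hr
    rw [← hr, Complex.ofReal_re]
  have hFx : AnalyticAt ℂ F x := hF.differentiableOn.analyticAt (ball_mem_nhds _ hR)
  rw [hre.iteratedDeriv_eq, iteratedDeriv_re_comp_ofReal hFx]
  exact (Complex.abs_re_le_norm _).trans
    (Complex.norm_iteratedDeriv_le_of_forall_mem_sphere_norm_le k hR hF hC)

/-! ### The standard normal distribution -/

theorem phi_eq_gaussianPDFReal : phi = ProbabilityTheory.gaussianPDFReal 0 1 := by
  funext x
  simp [phi, ProbabilityTheory.gaussianPDFReal]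

theorem integrable_phi : Integrable phi :=
  phi_eq_gaussianPDFReal ▸ ProbabilityTheory.integrable_gaussianPDFReal 0 1

theorem integral_phi : ∫ x, phi x = 1 :=
  phi_eq_gaussianPDFReal ▸ ProbabilityTheory.integral_gaussianPDFReal_eq_one 0 one_ne_zero

theorem phi_pos (x : ℝ) : 0 < phi x := by
  unfold phi
  positivity

theorem phi_neg (x : ℝ) : phi (-x) = phi x := by
  simp only [phi, neg_sq]

theorem Phi_eq_cdf : Phi = ProbabilityTheory.cdf (ProbabilityTheory.gaussianReal 0 1) := by
  funext x
  rw [ProbabilityTheory.cdf_eq_real, measureReal_def,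
    ProbabilityTheory.gaussianReal_apply_eq_integral _ one_ne_zero, ← phi_eq_gaussianPDFReal,
    ENNReal.toReal_ofReal (setIntegral_nonneg measurableSet_Iic fun t _ => (phi_pos t).le), Phi]

theorem monotone_Phi : Monotone Phi :=
  Phi_eq_cdf ▸ ProbabilityTheory.monotone_cdf _

theorem Phi_nonneg (x : ℝ) : 0 ≤ Phi x :=
  Phi_eq_cdf ▸ ProbabilityTheory.cdf_nonneg _ x

theorem Phi_le_one (x : ℝ) : Phi x ≤ 1 :=
  Phi_eq_cdf ▸ ProbabilityTheory.cdf_le_one _ x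

theorem Phi_pos (x : ℝ) : 0 < Phi x := by
  have hsupport : Function.support phi = Set.univ :=
    Set.eq_univ_of_forall fun t => (phi_pos t).ne'
  rw [Phi, setIntegral_pos_iff_support_of_nonneg_ae (ae_of_all _ fun t => (phi_pos t).le)
    integrable_phi.integrableOn, hsupport, Set.univ_inter, Real.volume_Iic]
  exact ENNReal.zero_lt_top

theorem Phi_neg (x : ℝ) : Phi (-x) = ∫ t in Set.Ioi x, phi t := by
  rw [Phi, ← integral_comp_neg_Ioi]
  simp only [phi_neg]

theorem Phi_add_Phi_neg (x : ℝ) : Phi x + Phi (-x) = 1 := by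
  rw [Phi_neg, Phi, ← Set.compl_Iic, integral_add_compl measurableSet_Iic integrable_phi,
    integral_phi]

theorem one_sub_Phi_pow_nonneg (n : ℕ) (x : ℝ) : 0 ≤ 1 - Phi x ^ n :=
  sub_nonneg.2 (pow_le_one₀ (Phi_nonneg x) (Phi_le_one x))

theorem one_sub_Phi_pow_le_one (n : ℕ) (x : ℝ) : 1 - Phi x ^ n ≤ 1 :=
  sub_le_self 1 (pow_nonneg (Phi_nonneg x) n)

theorem one_sub_Phi_pow_le (n : ℕ) (x : ℝ) : 1 - Phi x ^ n ≤ n * Phi (-x) := by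
  have bernoulli := one_add_mul_le_pow (a := -Phi (-x)) (by linarith [Phi_le_one (-x)]) n
  rw [show 1 + -Phi (-x) = Phi x by linarith [Phi_add_Phi_neg x]] at bernoulli
  linarith

theorem Phi_neg_mul_le {κ c : ℝ} (hκ : 1 ≤ κ) (hc : 0 ≤ c) :
    Phi (-(κ * c)) ≤ κ * Real.exp (-((κ ^ 2 - 1) / 2) * c ^ 2) * Phi (-c) := by
  have hκ0 : 0 < κ := by linarith
  have phi_mul_le : ∀ x ∈ Set.Ioi c,
      phi (κ * x) ≤ Real.exp (-((κ ^ 2 - 1) / 2) * c ^ 2) * phi x := fun x hx => by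
    have hsq : (κ ^ 2 - 1) * c ^ 2 ≤ (κ ^ 2 - 1) * x ^ 2 :=
      mul_le_mul_of_nonneg_left (pow_le_pow_left₀ hc (Set.mem_Ioi.1 hx).le 2)
        (sub_nonneg.2 (one_le_pow₀ hκ))
    rw [phi, phi, mul_left_comm, ← Real.exp_add]
    gcongr
    linarith
  rw [Phi_neg, Phi_neg, ← integral_comp_mul_left_Ioi' phi c hκ0, smul_eq_mul, mul_assoc,
    ← integral_const_mul (Real.exp _)]
  gcongr ?_ * ?_
  exact setIntegral_mono_on (integrable_phi.comp_mul_left' hκ0.ne').integrableOn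
    (integrable_phi.const_mul _).integrableOn measurableSet_Ioi phi_mul_le

theorem tendsto_atTop_of_tendsto_Phi_neg {ι : Type*} {l : Filter ι} {c : ι → ℝ}
    (h : Tendsto (fun i => Phi (-c i)) l (𝓝 0)) : Tendsto c l atTop := by
  refine tendsto_atTop.2 fun b => ?_
  filter_upwards [h.eventually_lt_const (Phi_pos (-b))] with i hi
  exact (neg_lt_neg_iff.1 (monotone_Phi.reflect_lt hi)).le

/-- The entire extension of the standard normal density `phi` to the complex plane. -/
noncomputable def complexPhi (w : ℂ) : ℂ :=
  ((Real.sqrt (2 * Real.pi))⁻¹ : ℝ) * Complex.exp (-w ^ 2 / 2)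

theorem complexPhi_ofReal (x : ℝ) : complexPhi x = phi x := by
  simp only [complexPhi, phi]
  push_cast
  rfl

@[fun_prop]
theorem differentiable_complexPhi : Differentiable ℂ complexPhi := by
  unfold complexPhi
  fun_prop

theorem norm_complexPhi_le (w : ℂ) : ‖complexPhi w‖ ≤ Real.exp (-(w ^ 2).re / 2) := by
  have hconst : (Real.sqrt (2 * Real.pi))⁻¹ ≤ 1 :=
    inv_le_one_of_one_le₀ (Real.one_le_sqrt.2 (by linarith [Real.pi_gt_three]))
  rw [complexPhi, norm_mul, Complex.norm_real, Real.norm_of_nonneg (by positivity),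
    Complex.norm_exp, Complex.div_ofNat_re, Complex.neg_re]
  exact mul_le_of_le_one_left (Real.exp_pos _).le hconst

/-! ### Transporting the parameter to the Gaussian kernel -/

/-- The slope `s(r)` of the affine map `z ↦ s(r) z + p(r) c` that transports level `ρ` to level
`r`, in the sense that `dd r c (s(r) z + p(r) c) = dd ρ c z`. It is extended to complex `r`. -/
noncomputable def transportScale (ρ : ℝ) (r : ℂ) : ℂ :=
  Complex.sqrt (1 - r) * Real.sqrt ρ / (Real.sqrt (1 - ρ) * Complex.sqrt r)

/-- The coefficient `p(r)` of `c` in the affine map of `transportScale`. -/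
noncomputable def transportShift (ρ : ℝ) (r : ℂ) : ℂ :=
  (Complex.sqrt (1 - r) / Real.sqrt (1 - ρ) - 1) / Complex.sqrt r

/-- The density at `z` of the pullback of the standard normal distribution under the affine map of
`transportScale`, extended to complex `r`. -/
noncomputable def transportKernel (ρ c : ℝ) (r : ℂ) (z : ℝ) : ℂ :=
  transportScale ρ r * complexPhi (transportScale ρ r * z + transportShift ρ r * c)

theorem complexSqrt_ofReal {x : ℝ} (hx : 0 ≤ x) : Complex.sqrt x = √x := by
  simpa using Complex.sqrt_of_nonneg (Complex.zero_le_real.2 hx)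

theorem transportScale_ofReal (ρ : ℝ) {r : ℝ} (hr : r ∈ Set.Icc 0 1) :
    transportScale ρ r = ((√(1 - r) * √ρ / (√(1 - ρ) * √r) : ℝ) : ℂ) := by
  rw [transportScale, ← Complex.ofReal_one, ← Complex.ofReal_sub, complexSqrt_ofReal hr.1,
    complexSqrt_ofReal (sub_nonneg.2 hr.2)]
  push_cast
  rfl

theorem transportShift_ofReal (ρ : ℝ) {r : ℝ} (hr : r ∈ Set.Icc 0 1) :
    transportShift ρ r = (((√(1 - r) / √(1 - ρ) - 1) / √r : ℝ) : ℂ) := by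
  rw [transportShift, ← Complex.ofReal_one, ← Complex.ofReal_sub, complexSqrt_ofReal hr.1,
    complexSqrt_ofReal (sub_nonneg.2 hr.2)]
  push_cast
  rfl

section Transport

variable {ρ : ℝ}

theorem transportScale_self (hρ : ρ ∈ Set.Ioo 0 1) : transportScale ρ ρ = 1 := by
  have hρ₀ := Real.sqrt_pos.2 hρ.1
  have hρ₁ := Real.sqrt_pos.2 (sub_pos.2 hρ.2)
  rw [transportScale_ofReal ρ (Set.Ioo_subset_Icc_self hρ), div_self (by positivity),
    Complex.ofReal_one]

theorem transportShift_self (hρ : ρ ∈ Set.Ioo 0 1) : transportShift ρ ρ = 0 := by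
  rw [transportShift_ofReal ρ (Set.Ioo_subset_Icc_self hρ),
    div_self (Real.sqrt_pos.2 (sub_pos.2 hρ.2)).ne', sub_self, zero_div, Complex.ofReal_zero]

theorem exists_real_transport (hρ : ρ ∈ Set.Ioo 0 1) {r : ℝ} (hr : r ∈ Set.Ioo 0 1) :
    ∃ s p : ℝ, 0 < s ∧ transportScale ρ r = s ∧ transportShift ρ r = p ∧
      ∀ c z, dd r c (s * z + p * c) = dd ρ c z := by
  have hρ₀ := Real.sqrt_pos.2 hρ.1
  have hρ₁ := Real.sqrt_pos.2 (sub_pos.2 hρ.2)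
  have hr₀ := Real.sqrt_pos.2 hr.1
  have hr₁ := Real.sqrt_pos.2 (sub_pos.2 hr.2)
  refine ⟨_, _, by positivity, transportScale_ofReal ρ (Set.Ioo_subset_Icc_self hr),
    transportShift_ofReal ρ (Set.Ioo_subset_Icc_self hr), fun c z => ?_⟩
  unfold dd
  field_simp
  ring

theorem differentiableAt_transportScale (hρ : ρ < 1) {r : ℂ} (hr₀ : r ∈ Complex.slitPlane)
    (hr₁ : 1 - r ∈ Complex.slitPlane) : DifferentiableAt ℂ (transportScale ρ) r := by
  have hsqrt : √(1 - ρ) * Complex.sqrt r ≠ 0 :=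
    mul_ne_zero (Complex.ofReal_ne_zero.2 (Real.sqrt_pos.2 (sub_pos.2 hρ)).ne')
      (by simp [Complex.sqrt, Complex.slitPlane_ne_zero hr₀])
  unfold transportScale
  fun_prop (disch := assumption)

theorem differentiableAt_transportShift (ρ : ℝ) {r : ℂ} (hr₀ : r ∈ Complex.slitPlane)
    (hr₁ : 1 - r ∈ Complex.slitPlane) : DifferentiableAt ℂ (transportShift ρ) r := by
  have hsqrt : Complex.sqrt r ≠ 0 := by simp [Complex.sqrt, Complex.slitPlane_ne_zero hr₀]
  unfold transportShift
  fun_prop (disch := assumption)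

theorem differentiableAt_transportKernel (hρ : ρ < 1) {r : ℂ} (hr₀ : r ∈ Complex.slitPlane)
    (hr₁ : 1 - r ∈ Complex.slitPlane) (c z : ℝ) :
    DifferentiableAt ℂ (transportKernel ρ c · z) r := by
  have hs := differentiableAt_transportScale hρ hr₀ hr₁
  have hp := differentiableAt_transportShift ρ hr₀ hr₁
  unfold transportKernel
  fun_prop

theorem eventually_mem_slitPlane (hρ : ρ ∈ Set.Ioo 0 1) :
    ∀ᶠ r in 𝓝 (ρ : ℂ), r ∈ Complex.slitPlane ∧ 1 - r ∈ Complex.slitPlane := by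
  have hρ₁ : (1 - ρ : ℂ) ∈ Complex.slitPlane :=
    mod_cast Complex.ofReal_mem_slitPlane.2 (sub_pos.2 hρ.2)
  exact (Complex.isOpen_slitPlane.eventually_mem (Complex.ofReal_mem_slitPlane.2 hρ.1)).and
    ((continuousAt_const.sub continuousAt_id).eventually
      (Complex.isOpen_slitPlane.eventually_mem hρ₁))

theorem le_re_sq_affine {s p : ℂ} {δ : ℝ} (hs : ‖s ^ 2 - 1‖ ≤ δ) (hsp : ‖2 * s * p‖ ≤ δ)
    (hp : ‖p ^ 2‖ ≤ δ) (z c : ℝ) :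
    (1 - 3 / 2 * δ) * z ^ 2 - 3 / 2 * δ * c ^ 2 ≤ ((s * z + p * c) ^ 2).re := by
  have hexpand : ((s * z + p * c) ^ 2).re =
      z ^ 2 + (s ^ 2 - 1).re * z ^ 2 + (2 * s * p).re * (z * c) + (p ^ 2).re * c ^ 2 := by
    rw [show (s * z + p * c) ^ 2 = (z ^ 2 : ℝ) + (s ^ 2 - 1) * (z ^ 2 : ℝ)
      + 2 * s * p * (z * c : ℝ) + p ^ 2 * (c ^ 2 : ℝ) by push_cast; ring]
    simp only [Complex.add_re, Complex.ofReal_re, Complex.re_mul_ofReal]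
  have hδ : 0 ≤ δ := (norm_nonneg _).trans hp
  have hzz : -(δ * z ^ 2) ≤ (s ^ 2 - 1).re * z ^ 2 := by
    rw [← neg_mul]
    gcongr
    exact neg_le_of_abs_le ((Complex.abs_re_le_norm _).trans hs)
  have hcc : -(δ * c ^ 2) ≤ (p ^ 2).re * c ^ 2 := by
    rw [← neg_mul]
    gcongr
    exact neg_le_of_abs_le ((Complex.abs_re_le_norm _).trans hp)
  have hzc : -(δ * ((z ^ 2 + c ^ 2) / 2)) ≤ (2 * s * p).re * (z * c) := by
    refine neg_le_of_abs_le ?_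
    rw [abs_mul]
    gcongr
    · exact (Complex.abs_re_le_norm _).trans hsp
    · rw [abs_le]
      constructor <;> nlinarith [sq_nonneg (z - c), sq_nonneg (z + c)]
  linarith

theorem norm_transportKernel_le {r : ℂ} {η : ℝ}
    (hs : ‖transportScale ρ r ^ 2 - 1‖ ≤ min (1 / 6) η)
    (hsp : ‖2 * transportScale ρ r * transportShift ρ r‖ ≤ min (1 / 6) η)
    (hp : ‖transportShift ρ r ^ 2‖ ≤ min (1 / 6) η) (c z : ℝ) :
    ‖transportKernel ρ c r z‖ ≤ 2 * Real.exp (η * c ^ 2) * Real.exp (-(3 / 8) * z ^ 2) := by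
  have hscale : ‖transportScale ρ r‖ ≤ 2 := by
    have hsq := norm_add_le (transportScale ρ r ^ 2 - 1) 1
    rw [sub_add_cancel, norm_pow, norm_one] at hsq
    exact le_of_sq_le_sq (by linarith [hs.trans (min_le_left _ _)]) zero_le_two
  have hre := le_re_sq_affine hs hsp hp z c
  have hz : min (1 / 6) η * z ^ 2 ≤ 1 / 6 * z ^ 2 := by
    gcongr
    exact min_le_left _ _
  have hc : min (1 / 6) η * c ^ 2 ≤ η * c ^ 2 := by
    gcongr
    exact min_le_right _ _
  have hc' : 0 ≤ min (1 / 6) η * c ^ 2 := mul_nonneg ((norm_nonneg _).trans hp) (sq_nonneg c)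
  rw [transportKernel, norm_mul, mul_assoc, ← Real.exp_add]
  gcongr
  refine (norm_complexPhi_le _).trans (Real.exp_le_exp.2 ?_)
  linarith

theorem eventually_norm_transportKernel_le (hρ : ρ ∈ Set.Ioo 0 1) {η : ℝ} (hη : 0 < η) :
    ∀ᶠ r in 𝓝 (ρ : ℂ), ∀ c z : ℝ,
      ‖transportKernel ρ c r z‖ ≤ 2 * Real.exp (η * c ^ 2) * Real.exp (-(3 / 8) * z ^ 2) := by
  obtain ⟨hρ₀, hρ₁⟩ := (eventually_mem_slitPlane hρ).self_of_nhds
  have scale_cont := (differentiableAt_transportScale hρ.2 hρ₀ hρ₁).continuousAt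
  have shift_cont := (differentiableAt_transportShift ρ hρ₀ hρ₁).continuousAt
  have hs : ∀ᶠ r in 𝓝 (ρ : ℂ), ‖transportScale ρ r ^ 2 - 1‖ ≤ min (1 / 6) η :=
    ((scale_cont.pow 2).sub continuousAt_const).norm.eventually_le_const
      (by simpa [transportScale_self hρ] using hη)
  have hsp : ∀ᶠ r in 𝓝 (ρ : ℂ), ‖2 * transportScale ρ r * transportShift ρ r‖ ≤ min (1 / 6) η :=
    ((continuousAt_const.mul scale_cont).mul shift_cont).norm.eventually_le_const
      (by simpa [transportShift_self hρ] using hη)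
  have hp : ∀ᶠ r in 𝓝 (ρ : ℂ), ‖transportShift ρ r ^ 2‖ ≤ min (1 / 6) η :=
    (shift_cont.pow 2).norm.eventually_le_const (by simpa [transportShift_self hρ] using hη)
  filter_upwards [hs, hsp, hp] with r h₁ h₂ h₃
  exact norm_transportKernel_le h₁ h₂ h₃

theorem exists_diffContOnCl_integral_mul_transportKernel (hρ : ρ ∈ Set.Ioo 0 1) {η : ℝ}
    (hη : 0 < η) :
    ∃ R > 0, ∀ (W : ℝ → ℝ) (e c : ℝ), Measurable W →
      (∀ z, |W z| ≤ e * Real.exp (z ^ 2 / 4)) →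
      DiffContOnCl ℂ (fun r => ∫ z, W z * transportKernel ρ c r z) (ball (ρ : ℂ) R) ∧
      ∀ r ∈ sphere (ρ : ℂ) R, ‖∫ z, W z * transportKernel ρ c r z‖ ≤
        2 * e * Real.exp (η * c ^ 2) * ∫ z : ℝ, Real.exp (-(1 / 8) * z ^ 2) := by
  obtain ⟨U, hU, hUo, hρU⟩ := _root_.eventually_nhds_iff.1
    ((eventually_mem_slitPlane hρ).and (eventually_norm_transportKernel_le hρ hη))
  obtain ⟨R, hR, hRU⟩ := nhds_basis_closedBall.mem_iff.1 (hUo.mem_nhds hρU)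
  refine ⟨R, hR, fun W e c hW hWe => ?_⟩
  have integrand_le : ∀ z : ℝ, ∀ r ∈ U, ‖W z * transportKernel ρ c r z‖ ≤
      2 * e * Real.exp (η * c ^ 2) * Real.exp (-(1 / 8) * z ^ 2) := fun z r hr => calc
    ‖W z * transportKernel ρ c r z‖ = |W z| * ‖transportKernel ρ c r z‖ := by
        rw [norm_mul, Complex.norm_real, Real.norm_eq_abs]
    _ ≤ e * Real.exp (z ^ 2 / 4) *
          (2 * Real.exp (η * c ^ 2) * Real.exp (-(3 / 8) * z ^ 2)) :=
        mul_le_mul (hWe z) ((hU r hr).2 c z) (norm_nonneg _) ((abs_nonneg _).trans (hWe z))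
    _ = 2 * e * Real.exp (η * c ^ 2) *
          (Real.exp (z ^ 2 / 4) * Real.exp (-(3 / 8) * z ^ 2)) := by ring
    _ = 2 * e * Real.exp (η * c ^ 2) * Real.exp (-(1 / 8) * z ^ 2) := by
        rw [← Real.exp_add]
        ring_nf
  have bound_integrable :
      Integrable fun z : ℝ => 2 * e * Real.exp (η * c ^ 2) * Real.exp (-(1 / 8) * z ^ 2) :=
    (integrable_exp_neg_mul_sq (by norm_num)).const_mul _
  constructor
  · refine (differentiableOn_integral_of_norm_le hUo (fun r _ => ?_) (ae_of_all _ fun z r hr => ?_)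
      (ae_of_all _ integrand_le) bound_integrable).diffContOnCl_ball hRU
    · have := differentiable_complexPhi.continuous.measurable
      unfold transportKernel
      fun_prop
    · exact ((differentiableAt_transportKernel hρ.2 (hU r hr).1.1 (hU r hr).1.2 c z).const_mul
        _).differentiableWithinAt
  · intro r hr
    rw [← integral_const_mul]
    exact norm_integral_le_of_norm_le bound_integrable
      (ae_of_all _ fun z => integrand_le z r (hRU (sphere_subset_closedBall hr)))

end Transport

theorem measurable_Phi_dd_pow (n : ℕ) (ρ c : ℝ) : Measurable fun z => Phi (dd ρ c z) ^ n := by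
  have hPhi := monotone_Phi.measurable
  unfold dd
  fun_prop

theorem integral_smul_comp_mul_add {E : Type*} [NormedAddCommGroup E] [NormedSpace ℝ E]
    (g : ℝ → E) {a : ℝ} (ha : 0 < a) (b : ℝ) : ∫ z, a • g (a * z + b) = ∫ z, g z := by
  rw [integral_smul, Measure.integral_comp_mul_left (fun y => g (y + b)),
    integral_add_right_eq_self, abs_of_pos (inv_pos.2 ha), smul_inv_smul₀ ha.ne']

theorem one_sub_Hn (n : ℕ) (r c : ℝ) :
    1 - Hn n r c = ∫ z, (1 - Phi (dd r c z) ^ n) * phi z := by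
  have hint : Integrable fun z => Phi (dd r c z) ^ n * phi z := by
    refine integrable_phi.bdd_mul (c := 1) (measurable_Phi_dd_pow n r c).aestronglyMeasurable
      (ae_of_all _ fun z => ?_)
    rw [Real.norm_of_nonneg (pow_nonneg (Phi_nonneg _) n)]
    exact pow_le_one₀ (Phi_nonneg _) (Phi_le_one _)
  simp only [sub_mul, one_mul]
  rw [integral_sub integrable_phi hint, integral_phi, Hn]

theorem one_sub_Hn_eq_integral_transportKernel {ρ r : ℝ} (hρ : ρ ∈ Set.Ioo 0 1)
    (hr : r ∈ Set.Ioo 0 1) (n : ℕ) (c : ℝ) :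
    ((1 - Hn n r c : ℝ) : ℂ) =
      ∫ z, ((1 - Phi (dd ρ c z) ^ n : ℝ) : ℂ) * transportKernel ρ c r z := by
  obtain ⟨s, p, hs, hscale, hshift, hdd⟩ := exists_real_transport hρ hr
  rw [one_sub_Hn, ← integral_smul_comp_mul_add _ hs (p * c), ← integral_complex_ofReal]
  congr 1
  funext z
  rw [hdd, transportKernel, hscale, hshift, smul_eq_mul, mul_left_comm]
  push_cast [← complexPhi_ofReal]
  rfl

/-! ### Tail estimate -/

theorem mul_le_dd {ρ ε κ c z : ℝ} (hρ : ρ < 1) (hεκ : κ * √(1 - ρ) + ε * √ρ ≤ 1) (hc : 0 ≤ c)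
    (hz : -(ε * c) ≤ z) : κ * c ≤ dd ρ c z := by
  rw [dd, le_div_iff₀ (Real.sqrt_pos.2 (sub_pos.2 hρ))]
  nlinarith [mul_le_mul_of_nonneg_left hz (Real.sqrt_nonneg ρ), mul_le_mul_of_nonneg_right hεκ hc]

theorem one_sub_Phi_dd_pow_le {ρ ε κ c : ℝ} (hρ : ρ < 1) (hε : 0 ≤ ε) (hκ : 1 ≤ κ)
    (hεκ : κ * √(1 - ρ) + ε * √ρ ≤ 1) (hc : 0 ≤ c) (n : ℕ) (z : ℝ) :
    1 - Phi (dd ρ c z) ^ n ≤ (Real.exp (-(ε ^ 2 / 4) * c ^ 2) +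
      κ * (n * Phi (-c)) * Real.exp (-((κ ^ 2 - 1) / 2) * c ^ 2)) * Real.exp (z ^ 2 / 4) := by
  have hPhi := Phi_nonneg (-c)
  rw [add_mul]
  rcases le_total z (-(ε * c)) with hz | hz
  · have hsq : (ε * c) ^ 2 ≤ z ^ 2 := by
      rw [← neg_sq z]
      exact pow_le_pow_left₀ (mul_nonneg hε hc) (le_neg_of_le_neg hz) 2
    calc 1 - Phi (dd ρ c z) ^ n ≤ 1 := one_sub_Phi_pow_le_one n _
      _ ≤ Real.exp (-(ε ^ 2 / 4) * c ^ 2) * Real.exp (z ^ 2 / 4) := by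
          rw [← Real.exp_add, Real.one_le_exp_iff]
          linarith
      _ ≤ _ := le_add_of_nonneg_right (by positivity)
  · have hd : Phi (-dd ρ c z) ≤ Phi (-(κ * c)) :=
      monotone_Phi (neg_le_neg (mul_le_dd hρ hεκ hc hz))
    calc 1 - Phi (dd ρ c z) ^ n ≤ n * Phi (-dd ρ c z) := one_sub_Phi_pow_le n _
      _ ≤ n * (κ * Real.exp (-((κ ^ 2 - 1) / 2) * c ^ 2) * Phi (-c)) := by
          gcongr
          exact hd.trans (Phi_neg_mul_le hκ hc)
      _ = κ * (n * Phi (-c)) * Real.exp (-((κ ^ 2 - 1) / 2) * c ^ 2) := by ring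
      _ ≤ κ * (n * Phi (-c)) * Real.exp (-((κ ^ 2 - 1) / 2) * c ^ 2) * Real.exp (z ^ 2 / 4) :=
          le_mul_of_one_le_right (by positivity) (Real.one_le_exp (by positivity))
      _ ≤ _ := le_add_of_nonneg_left (by positivity)

theorem exists_mul_sqrt_add_mul_sqrt_le_one {ρ : ℝ} (hρ : ρ ∈ Set.Ioo 0 1) :
    ∃ ε > 0, ∃ κ > 1, κ * √(1 - ρ) + ε * √ρ ≤ 1 := by
  have hρ₀ := Real.sqrt_pos.2 hρ.1
  have hρ₁ := Real.sqrt_pos.2 (sub_pos.2 hρ.2)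
  have hlt : √(1 - ρ) < 1 := by
    rw [Real.sqrt_lt' one_pos]
    linarith [hρ.1]
  refine ⟨(1 - √(1 - ρ)) / (2 * √ρ), div_pos (by linarith) (by positivity),
    (1 + √(1 - ρ)) / (2 * √(1 - ρ)), (one_lt_div (by positivity)).2 (by linarith), le_of_eq ?_⟩
  field_simp
  ring

theorem exists_one_sub_Phi_dd_pow_le {ρ : ℝ} (hρ : ρ ∈ Set.Ioo 0 1) :
    ∃ a > 0, ∃ κ, ∀ (n : ℕ) (c : ℝ), 0 ≤ c → ∀ z, 1 - Phi (dd ρ c z) ^ n ≤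
      (1 + κ * (n * Phi (-c))) * Real.exp (-a * c ^ 2) * Real.exp (z ^ 2 / 4) := by
  obtain ⟨ε, hε, κ, hκ, hεκ⟩ := exists_mul_sqrt_add_mul_sqrt_le_one hρ
  have hκ_sq : 0 < κ ^ 2 - 1 := sub_pos.2 (one_lt_pow₀ hκ two_ne_zero)
  refine ⟨min (ε ^ 2 / 4) ((κ ^ 2 - 1) / 2), by positivity, κ, fun n c hc z => ?_⟩
  refine (one_sub_Phi_dd_pow_le hρ.2 hε.le hκ.le hεκ hc n z).trans ?_
  have hPhi := Phi_nonneg (-c)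
  rw [add_mul 1, one_mul]
  gcongr
  · exact min_le_left _ _
  · exact min_le_right _ _

theorem exists_abs_iteratedDeriv_Hn_le {ρ : ℝ} (hρ : ρ ∈ Set.Ioo 0 1) {k : ℕ} (hk : k ≠ 0) :
    ∃ a > 0, ∃ κ C, ∀ (n : ℕ) (c : ℝ), 0 ≤ c →
      |iteratedDeriv k (fun r => Hn n r c) ρ| ≤
        C * (1 + κ * (n * Phi (-c))) * Real.exp (-a * c ^ 2) := by
  obtain ⟨a, ha, κ, weight_le⟩ := exists_one_sub_Phi_dd_pow_le hρ
  obtain ⟨R, hR, hextension⟩ :=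
    exists_diffContOnCl_integral_mul_transportKernel hρ (half_pos ha)
  refine ⟨a / 2, half_pos ha, κ,
    k.factorial * 2 * (∫ z : ℝ, Real.exp (-(1 / 8) * z ^ 2)) / R ^ k, fun n c hc => ?_⟩
  obtain ⟨hdiff, hbound⟩ := hextension (fun z => 1 - Phi (dd ρ c z) ^ n)
    ((1 + κ * (n * Phi (-c))) * Real.exp (-a * c ^ 2)) c
    (measurable_const.sub (measurable_Phi_dd_pow n ρ c)) fun z => by
      rw [abs_of_nonneg (one_sub_Phi_pow_nonneg n _)]
      exact weight_le n c hc z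
  have hHn : ∀ᶠ r : ℝ in 𝓝 ρ, ((1 - Hn n r c : ℝ) : ℂ) =
      ∫ z, ((1 - Phi (dd ρ c z) ^ n : ℝ) : ℂ) * transportKernel ρ c r z :=
    (isOpen_Ioo.eventually_mem hρ).mono fun r hr =>
      one_sub_Hn_eq_integral_transportKernel hρ hr n c
  have hderiv : |iteratedDeriv k (fun r => Hn n r c) ρ| =
      |iteratedDeriv k (fun r => 1 - Hn n r c) ρ| := by
    rw [iteratedDeriv_const_sub (Nat.pos_of_ne_zero hk), iteratedDeriv_neg, abs_neg]
  rw [hderiv]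
  refine (abs_iteratedDeriv_le_of_forall_mem_sphere_norm_le k hR hdiff hbound hHn).trans_eq ?_
  have hexp : Real.exp (-(a / 2) * c ^ 2) = Real.exp (-a * c ^ 2) * Real.exp (a / 2 * c ^ 2) := by
    rw [← Real.exp_add]
    ring_nf
  rw [hexp]
  ring

theorem limsup_second_deriv_Hn_nonpos_general {ρ : ℝ} (hρ : ρ ∈ Set.Ioo 0 1) {c : ℕ → ℝ}
    (hc : (fun n : ℕ => n * Phi (-c n)) =O[atTop] fun _ => (1 : ℝ)) {k : ℕ} (hk : k ≠ 0) :
    Tendsto (fun n => iteratedDeriv k (fun r => Hn n r (c n)) ρ) atTop (𝓝 0) := by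
  obtain ⟨a, ha, κ, C, hC⟩ := exists_abs_iteratedDeriv_Hn_le hρ hk
  have hPhi : Tendsto (fun n => Phi (-c n)) atTop (𝓝 0) := by
    have hinv := (hc.mul (isBigO_refl (fun n : ℕ => (n : ℝ)⁻¹) atTop)).trans_tendsto
      (by simpa only [one_mul] using tendsto_inv_atTop_nhds_zero_nat)
    refine hinv.congr' ?_
    filter_upwards [eventually_ne_atTop 0] with n hn
    rw [mul_right_comm, mul_inv_cancel₀ (Nat.cast_ne_zero.2 hn), one_mul]
  have hc_atTop := tendsto_atTop_of_tendsto_Phi_neg hPhi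
  have hexp : Tendsto (fun n => Real.exp (-a * c n ^ 2)) atTop (𝓝 0) :=
    Real.tendsto_exp_atBot.comp
      (((tendsto_pow_atTop two_ne_zero).comp hc_atTop).const_mul_atTop_of_neg (neg_neg_of_pos ha))
  have hfactor : (fun n : ℕ => C * (1 + κ * (n * Phi (-c n)))) =O[atTop] fun _ => (1 : ℝ) :=
    ((isBigO_refl _ _).add (hc.const_mul_left κ)).const_mul_left C
  have hbound := (hfactor.mul (isBigO_refl (fun n => Real.exp (-a * c n ^ 2)) atTop)).trans_tendsto
    (by simpa only [one_mul] using hexp)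
  refine squeeze_zero_norm' ?_ hbound
  filter_upwards [hc_atTop.eventually_ge_atTop 0] with n hn
  exact hC n (c n) hn

theorem limsup_second_deriv_Hn_nonpos
    (ρ : ℝ) (hρ : ρ ∈ Set.Ioo (0:ℝ) 1) (α : ℝ) (hα : α ∈ Set.Ioo (0:ℝ) 1)
    (αseq : ℕ → ℝ) (hαseq : ∀ n, αseq n ∈ Set.Ioo (0:ℝ) 1)
    (hlim : Tendsto (fun n : ℕ => (n : ℝ) * αseq n) atTop (nhds α))
    (c : ℕ → ℝ) (hc : ∀ n, Phi (-(c n)) = αseq n) :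
    limsup (fun n : ℕ => deriv (deriv (fun r => Hn n r (c n))) ρ) atTop ≤ 0 := by
  refine (Tendsto.limsup_eq ?_).le
  simpa only [iteratedDeriv_succ, iteratedDeriv_zero] using
    limsup_second_deriv_Hn_nonpos_general hρ (c := c)
      (by simpa only [hc] using hlim.isBigO_one ℝ) two_ne_zero
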